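/- Let Λ be a unimodular lattice in ℝ^d with dual Λ*, and f(τ) = |τ|_+. Then for every k ∈ {1,…,d}: ψ̲_k(Λ,f) and ψ̄_{d+1−k}(Λ*,f) are either both zero or have opposite signs, and likewise ψ̄_k(Λ,f) and ψ̲_{d+1−k}(Λ*,f); moreover |ψ̲_k(Λ,f)| ≤ (d−1)·|ψ̄_{d+1−k}(Λ*,f)| and |ψ̄_k(Λ,f)| ≤ (d−1)·|ψ̲_{d+1−k}(Λ*,f)|. -/

import Mathlib

open Filter

noncomputable section

/-- A unimodular lattice in `ℝ^d`: the set of integer linear combinations of a basis of `ℝ^d`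
whose matrix has determinant `±1`. -/
def IsUnimodularLattice (d : ℕ) (Λ : Set (Fin d → ℝ)) : Prop :=
  ∃ B : Matrix (Fin d) (Fin d) ℝ, |B.det| = 1 ∧
    Λ = {v | ∃ x : Fin d → ℤ, v = B.mulVec fun i => (x i : ℝ)}

/-- The dual lattice `Λ* = {w : ⟨w, z⟩ ∈ ℤ for all z ∈ Λ}`. -/
def dualLattice (d : ℕ) (Λ : Set (Fin d → ℝ)) : Set (Fin d → ℝ) :=
  {w | ∀ z ∈ Λ, ∃ c : ℤ, ∑ i, w i * z i = (c : ℝ)}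

/-- The `k`-th successive minimum `λ_k(B_τ, Λ)` of the box
`B_τ = {z : |z_i| ≤ exp (τ i)}` with respect to the lattice `Λ`. -/
def succMin (d : ℕ) (Λ : Set (Fin d → ℝ)) (τ : Fin d → ℝ) (k : ℕ) : ℝ :=
  sInf {lam : ℝ | 0 < lam ∧ ∃ v : Fin k → (Fin d → ℝ),
    (∀ l, v l ∈ Λ) ∧ LinearIndependent ℝ v ∧ ∀ l i, |v l i| ≤ lam * Real.exp (τ i)}

/-- `L_k(Λ, τ) = log λ_k(B_τ, Λ)`. -/
def Lk (d : ℕ) (Λ : Set (Fin d → ℝ)) (τ : Fin d → ℝ) (k : ℕ) : ℝ :=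
  Real.log (succMin d Λ τ k)

/-- The filter on `ℝ^d` of `τ ∈ T` (i.e. `∑ τ_i = 0`) with `|τ| = max_i |τ_i| → ∞`. -/
def Tfilter (d : ℕ) : Filter (Fin d → ℝ) :=
  (Filter.atTop.comap fun τ : Fin d → ℝ => ⨆ i, |τ i|) ⊓
    Filter.principal {τ | ∑ i, τ i = 0}

/-- `ψ̲_k(Λ, f)` for `f(τ) = |τ|_+ = max_i τ_i`: the liminf of `L_k(Λ,τ)/|τ|_+` over
`τ ∈ T` with `|τ| → ∞`. -/
def psiLowF (d : ℕ) (Λ : Set (Fin d → ℝ)) (k : ℕ) : ℝ :=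
  liminf (fun τ : Fin d → ℝ => Lk d Λ τ k / ⨆ i, τ i) (Tfilter d)

/-- `ψ̄_k(Λ, f)` for `f(τ) = |τ|_+ = max_i τ_i`: the limsup of `L_k(Λ,τ)/|τ|_+` over
`τ ∈ T` with `|τ| → ∞`. -/
def psiUpF (d : ℕ) (Λ : Set (Fin d → ℝ)) (k : ℕ) : ℝ :=
  limsup (fun τ : Fin d → ℝ => Lk d Λ τ k / ⨆ i, τ i) (Tfilter d)

/-!
Let `v₁, …, v_d` realise the successive minima of a lattice `L` in a Euclidean space. The box with
half-sides `‖v_j‖ / √d` along the Gram–Schmidt basis of `v` contains no nonzero point of `L` in its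
interior, so Minkowski's convex body theorem bounds `∏ ‖v_j‖` by a multiple of the covolume. The
cofactor vectors `w_j` of `v`, taken with respect to a basis of `L`, lie in `L*`, and by Hadamard's
inequality `‖v_j‖ * ‖w_j‖` is at most `∏ ‖v_i‖` over the covolume, hence bounded. Applied to `L`
rescaled by `exp (-τ)`, this bounds `λ_k(B_τ, L) * λ_{d+1-k}(B_{-τ}, L*)` from above. It is bounded
from below because `k` independent vectors of `L` and `d + 1 - k` of `L*` cannot all be orthogonal,
and their pairings are integers.

Hence `L_k(L, τ) + L_{d+1-k}(L*, -τ)` is bounded. Since each of `|τ|_+`, `|-τ|_+` is at most `d - 1`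
times the other when `∑ τ_i = 0`, replacing `τ` by `-τ` turns the limit inferior for `L` into minus
the limit superior for `L*`, up to a factor in `[1 / (d - 1), d - 1]`.
-/

open MeasureTheory Module

local notation "⟪" x ", " y "⟫" => inner ℝ x y

section MinimalSystem

variable {E : Type*} [NormedAddCommGroup E] [NormedSpace ℝ E] {n : ℕ}

/-- A system of vectors realising the successive minima of a lattice `L`: `v j` is a shortest
vector of `L` outside the span of its predecessors. -/
structure IsMinimalSystem (L : Submodule ℤ E) (v : Fin n → E) : Prop where
  mem : ∀ j, v j ∈ L
  linearIndependent : LinearIndependent ℝ v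
  norm_le : ∀ j, ∀ x ∈ L, x ∉ Submodule.span ℝ (v '' Set.Iio j) → ‖v j‖ ≤ ‖x‖

theorem IsMinimalSystem.monotone_norm {L : Submodule ℤ E} {v : Fin n → E}
    (hv : IsMinimalSystem L v) : Monotone fun j => ‖v j‖ := fun i j hij =>
  hv.norm_le i (v j) (hv.mem j) <|
    hv.linearIndependent.notMem_span_image (by simpa using hij)

theorem IsMinimalSystem.snoc {L : Submodule ℤ E} {v : Fin n → E}
    (hv : IsMinimalSystem L v) {x : E} (hxL : x ∈ L) (hxv : x ∉ Submodule.span ℝ (Set.range v))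
    (hx : ∀ y ∈ L, y ∉ Submodule.span ℝ (Set.range v) → ‖x‖ ≤ ‖y‖) :
    IsMinimalSystem L (Fin.snoc v x : Fin (n + 1) → E) := by
  have hcast (i : Fin n) :
      (Fin.snoc v x : Fin (n + 1) → E) '' Set.Iio i.castSucc = v '' Set.Iio i := by
    rw [← Fin.image_castSucc_Iio, Set.image_image]
    simp only [Fin.snoc_castSucc]
  have hlast : (Fin.snoc v x : Fin (n + 1) → E) '' Set.Iio (Fin.last n) = Set.range v := by
    have hIio : Set.Iio (Fin.last n) = Set.range Fin.castSucc := by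
      ext i
      simp only [Set.mem_Iio, Set.mem_range, Fin.lt_last_iff_ne_last, Fin.exists_castSucc_eq]
    rw [hIio, ← Set.range_comp, Fin.snoc_comp_castSucc]
  refine ⟨fun j => ?_, hv.linearIndependent.finSnoc hxv, fun j => ?_⟩
  · cases j using Fin.lastCases with
    | last => simpa using hxL
    | cast i => simpa using hv.mem i
  · cases j using Fin.lastCases with
    | last => simpa [hlast] using hx
    | cast i => simpa [hcast] using hv.norm_le i

variable [FiniteDimensional ℝ E] (L : Submodule ℤ E) [DiscreteTopology L]

theorem finite_closedBall_inter_lattice (r : ℝ) :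
    (Metric.closedBall 0 r ∩ (L : Set E)).Finite := by
  have : DiscreteTopology L.toAddSubgroup := ‹DiscreteTopology L›
  have hclosed : IsClosed (L.toAddSubgroup : Set E) := inferInstance
  exact Metric.finite_isBounded_inter_isClosed DiscreteTopology.isDiscrete
    Metric.isBounded_closedBall hclosed

variable [IsZLattice ℝ L]

theorem exists_shortest_notMem {W : Submodule ℝ E} (hW : W ≠ ⊤) :
    ∃ x ∈ L, x ∉ W ∧ ∀ y ∈ L, y ∉ W → ‖x‖ ≤ ‖y‖ := by
  obtain ⟨z, hzL, hzW⟩ : ∃ z ∈ L, z ∉ W := by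
    by_contra! hLW
    exact hW <| top_unique <| IsZLattice.span_top (K := ℝ) (L := L) ▸ Submodule.span_le.2 hLW
  obtain ⟨x, ⟨⟨hxz, hxL⟩, hxW⟩, hx⟩ :=
    Set.exists_min_image ((Metric.closedBall 0 ‖z‖ ∩ (L : Set E)) \ W) norm
      ((finite_closedBall_inter_lattice L ‖z‖).subset Set.sdiff_subset) ⟨z, by simp [hzL], hzW⟩
  refine ⟨x, hxL, hxW, fun y hyL hyW => ?_⟩
  by_cases hyz : ‖y‖ ≤ ‖z‖
  · exact hx y ⟨⟨by simpa using hyz, hyL⟩, hyW⟩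
  · exact (mem_closedBall_zero_iff.1 hxz).trans (not_le.1 hyz).le

theorem exists_isMinimalSystem (hn : n ≤ finrank ℝ E) : ∃ v : Fin n → E, IsMinimalSystem L v := by
  induction n with
  | zero =>
    exact ⟨Fin.elim0, fun j => j.elim0, linearIndependent_empty_type, fun j => j.elim0⟩
  | succ n ih =>
    obtain ⟨v, hv⟩ := ih (by lia)
    have hspan : Submodule.span ℝ (Set.range v) ≠ ⊤ := fun htop => by
      have := finrank_range_le_card (R := ℝ) v
      rw [Set.finrank, htop, finrank_top, Fintype.card_fin] at this
      lia
    obtain ⟨x, hxL, hxv, hx⟩ := exists_shortest_notMem L hspan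
    exact ⟨_, hv.snoc hxL hxv hx⟩

variable [MeasurableSpace E] [BorelSpace E]

theorem measure_le_covolume_mul_two_pow (μ : Measure E) [μ.IsAddHaarMeasure] {s : Set E}
    (hsymm : ∀ x ∈ s, -x ∈ s) (hconv : Convex ℝ s) (hs : ∀ x ∈ L, x ∈ s → x = 0) :
    μ s ≤ ENNReal.ofReal (ZLattice.covolume L μ) * 2 ^ finrank ℝ E := by
  let b := (Free.chooseBasis ℤ L).ofZLatticeBasis ℝ
  have hF : IsAddFundamentalDomain L.toAddSubgroup (ZSpan.fundamentalDomain b) μ :=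
    ZLattice.isAddFundamentalDomain (Free.chooseBasis ℤ L) μ
  have : Countable L.toAddSubgroup := inferInstanceAs (Countable L)
  rw [ZLattice.covolume_eq_measure_fundamentalDomain L μ hF,
    ofReal_measureReal (ZSpan.fundamentalDomain_isBounded b).measure_lt_top.ne]
  by_contra! hlt
  obtain ⟨⟨x, hxL⟩, hx0, hxs⟩ :=
    exists_ne_zero_mem_lattice_of_measure_mul_two_pow_lt_measure hF hsymm hconv hlt
  exact hx0 (Subtype.ext (hs x hxL hxs))

end MinimalSystem

section Orthonormal

variable {E : Type*} [NormedAddCommGroup E] [InnerProductSpace ℝ E] {n : ℕ}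

theorem exists_inner_ne_zero_of_finrank_lt [FiniteDimensional ℝ E] {ι κ : Type*} [Fintype ι]
    [Fintype κ] {v : ι → E} {w : κ → E} (hv : LinearIndependent ℝ v) (hw : LinearIndependent ℝ w)
    (h : finrank ℝ E < Fintype.card ι + Fintype.card κ) : ∃ i j, ⟪v i, w j⟫ ≠ 0 := by
  by_contra! horth
  have hperp : Submodule.span ℝ (Set.range v) ⟂ Submodule.span ℝ (Set.range w) := by
    rw [Submodule.isOrtho_span]
    rintro _ ⟨i, rfl⟩ _ ⟨j, rfl⟩
    exact horth i j
  have hle := Submodule.finrank_mono hperp.le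
  have hsum := (Submodule.span ℝ (Set.range w)).finrank_add_finrank_orthogonal
  rw [finrank_span_eq_card hw] at hsum
  rw [finrank_span_eq_card hv] at hle
  lia

theorem linearIndependent_of_inner_eq_ite {ι : Type*} [DecidableEq ι] {v w : ι → E}
    {c : ℝ} (hc : c ≠ 0) (h : ∀ i j, ⟪w i, v j⟫ = if i = j then c else 0) :
    LinearIndependent ℝ w := by
  rw [linearIndependent_iff']
  intro s a ha j hj
  have := congrArg (⟪·, v j⟫) ha
  simpa [sum_inner, inner_smul_left, h, hc, hj] using this

theorem abs_det_le_prod_norm (e : OrthonormalBasis (Fin n) ℝ E) (v : Fin n → E) :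
    |e.toBasis.det v| ≤ ∏ i, ‖v i‖ := by
  have : Fact (finrank ℝ E = n) := ⟨by simpa using finrank_eq_card_basis e.toBasis⟩
  exact e.toBasis.orientation.volumeForm_robust' e v ▸
    e.toBasis.orientation.abs_volumeForm_apply_le v

theorem norm_lt_of_abs_inner_lt (e : OrthonormalBasis (Fin n) ℝ E) {x : E} {j : Fin n} {r : ℝ}
    (hr : 0 ≤ r) (hlt : ∀ i ≤ j, |⟪e i, x⟫| < r / √n) (hzero : ∀ i, j < i → ⟪e i, x⟫ = 0) :
    ‖x‖ < r := by
  have hn : (0 : ℝ) < n := by exact_mod_cast j.pos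
  have : 0 < r / √n := (abs_nonneg _).trans_lt (hlt j le_rfl)
  refine lt_of_pow_lt_pow_left₀ 2 hr ?_
  calc ‖x‖ ^ 2 = ∑ i, |⟪e i, x⟫| ^ 2 := (e.sum_sq_norm_inner_right x).symm
    _ < ∑ i : Fin n, (r / √n) ^ 2 := by
      refine Finset.sum_lt_sum_of_nonempty ⟨j, Finset.mem_univ j⟩ fun i _ => ?_
      rcases le_or_gt i j with hij | hij
      · exact pow_lt_pow_left₀ (hlt i hij) (abs_nonneg _) two_ne_zero
      · simpa [hzero i hij] using by positivity
    _ = r ^ 2 := by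
      simp only [div_pow, Finset.sum_const, Finset.card_univ, Fintype.card_fin, nsmul_eq_mul,
        Nat.cast_nonneg, Real.sq_sqrt]
      field_simp

theorem IsMinimalSystem.eq_zero_of_abs_inner_lt {L : Submodule ℤ E} {v : Fin n → E}
    (hv : IsMinimalSystem L v) (e : OrthonormalBasis (Fin n) ℝ E)
    (he : ∀ i j, i < j → ⟪e j, v i⟫ = 0) {x : E} (hx : x ∈ L)
    (hlt : ∀ i, |⟪e i, x⟫| < ‖v i‖ / √n) : x = 0 := by
  by_contra hx0
  obtain ⟨i₀, hi₀⟩ : ∃ i, ⟪e i, x⟫ ≠ 0 := by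
    by_contra! h
    exact hx0 (e.repr.map_eq_zero_iff.1 (by ext i; simpa [e.repr_apply_apply] using h i))
  obtain ⟨j, hj, hmax⟩ := (Finset.univ.filter fun i => ⟪e i, x⟫ ≠ 0).exists_max_image id
    ⟨i₀, by simpa using hi₀⟩
  have hjx : ⟪e j, x⟫ ≠ 0 := by simpa using hj
  have hzero : ∀ i, j < i → ⟪e i, x⟫ = 0 := fun i hji => by
    by_contra h
    exact (hmax i (by simpa using h)).not_gt hji
  have hspan : x ∉ Submodule.span ℝ (v '' Set.Iio j) := fun hmem => by
    have : Submodule.span ℝ (v '' Set.Iio j) ≤ (innerSL ℝ (e j)).ker :=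
      Submodule.span_le.2 (Set.image_subset_iff.2 fun i hi => he i j hi)
    exact hjx (this hmem)
  refine (hv.norm_le j x hx hspan).not_gt
    (norm_lt_of_abs_inner_lt e (norm_nonneg _) (fun i hij => (hlt i).trans_le ?_) hzero)
  gcongr
  exact hv.monotone_norm hij

variable [FiniteDimensional ℝ E] [MeasurableSpace E] [BorelSpace E]

theorem volume_setOf_abs_inner_lt {ι : Type*} [Fintype ι] (e : OrthonormalBasis ι ℝ E)
    (r : ι → ℝ) : volume {x | ∀ i, |⟪e i, x⟫| < r i} = ∏ i, ENNReal.ofReal (2 * r i) := by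
  have hpre : {x | ∀ i, |⟪e i, x⟫| < r i} =
      (WithLp.ofLp ∘ e.repr) ⁻¹' Set.univ.pi fun i => Set.Ioo (-r i) (r i) := by
    ext x
    simp [abs_lt, e.repr_apply_apply]
  rw [hpre, ((PiLp.volume_preserving_ofLp ι).comp e.measurePreserving_repr).measure_preimage
    (MeasurableSet.univ_pi fun _ => measurableSet_Ioo).nullMeasurableSet, Real.volume_pi_Ioo]
  congr! 2
  ring

theorem covolume_eq_abs_det {ι : Type*} [Fintype ι] [DecidableEq ι] (L : Submodule ℤ E)
    [DiscreteTopology L] [IsZLattice ℝ L] (b : Basis ι ℤ L) (e : OrthonormalBasis ι ℝ E) :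
    ZLattice.covolume L = |e.toBasis.det (b.ofZLatticeBasis ℝ)| := by
  have hvol : volume (ZSpan.fundamentalDomain e.toBasis) = 1 := by
    rw [measure_congr (ZSpan.fundamentalDomain_ae_parallelepiped e.toBasis volume),
      e.coe_toBasis, e.volume_parallelepiped]
  have hb : ⇑(b.ofZLatticeBasis ℝ) = Subtype.val ∘ b := by
    ext i
    simp
  rw [ZLattice.covolume_eq_det_mul_measureReal L volume b e.toBasis, measureReal_def, hvol,
    ENNReal.toReal_one, mul_one, hb]

theorem prod_le_covolume {ι : Type*} [Fintype ι] (L : Submodule ℤ E) [DiscreteTopology L]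
    [IsZLattice ℝ L] (e : OrthonormalBasis ι ℝ E) {r : ι → ℝ} (hr : ∀ i, 0 ≤ r i)
    (h : ∀ x ∈ L, (∀ i, |⟪e i, x⟫| < r i) → x = 0) : ∏ i, r i ≤ ZLattice.covolume L := by
  have hconv : Convex ℝ {x | ∀ i, |⟪e i, x⟫| < r i} := by
    have : {x | ∀ i, |⟪e i, x⟫| < r i} =
        ⋂ i, innerₗ E (e i) ⁻¹' Metric.ball 0 (r i) := by
      ext x
      simp
    rw [this]
    exact convex_iInter fun i => (convex_ball 0 (r i)).linear_preimage (innerₗ E (e i))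
  have hvol := measure_le_covolume_mul_two_pow L volume
    (s := {x | ∀ i, |⟪e i, x⟫| < r i}) (fun x hx i => by simpa using hx i) hconv h
  have hcov : 0 < ZLattice.covolume L := ZLattice.covolume_pos L volume
  rw [volume_setOf_abs_inner_lt, ← ENNReal.ofReal_prod_of_nonneg (fun i _ => by grind),
    ← ENNReal.ofReal_ofNat 2, ← ENNReal.ofReal_pow zero_le_two, ← ENNReal.ofReal_mul hcov.le,
    ENNReal.ofReal_le_ofReal_iff (by positivity), Finset.prod_mul_distrib, Finset.prod_const,
    Finset.card_univ, ← finrank_eq_card_basis e.toBasis, mul_comm] at hvol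
  exact le_of_mul_le_mul_right hvol (by positivity)

end Orthonormal

section Cofactor

variable {E : Type*} [NormedAddCommGroup E] [InnerProductSpace ℝ E] [FiniteDimensional ℝ E]

theorem exists_int_eq_det {ι : Type*} [Fintype ι] [DecidableEq ι] {L : Submodule ℤ E}
    [DiscreteTopology L] [IsZLattice ℝ L] (b : Basis ι ℤ L) {v : ι → E} (hv : ∀ i, v i ∈ L) :
    ∃ c : ℤ, (b.ofZLatticeBasis ℝ).det v = c := by
  refine ⟨b.det fun i => ⟨v i, hv i⟩, ?_⟩
  rw [Basis.det_apply, Basis.det_apply, Int.cast_det]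
  congr 1
  ext i j
  exact b.ofZLatticeBasis_repr_apply ℝ L ⟨v j, hv j⟩ i

variable {ι : Type*} [DecidableEq ι]

/-- The vector representing the linear form `y ↦ ω (v₁, …, y, …, vₙ)`, with `y` in the `j`-th place;
for `ω` a determinant, its coordinates are the cofactors of `v j`. -/
def cofactorVector (ω : E [⋀^ι]→ₗ[ℝ] ℝ) (v : ι → E) (j : ι) : E :=
  (InnerProductSpace.toDual ℝ E).symm (ω.toMultilinearMap.toLinearMap v j).toContinuousLinearMap

theorem inner_cofactorVector (ω : E [⋀^ι]→ₗ[ℝ] ℝ) (v : ι → E) (j : ι) (y : E) :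
    ⟪cofactorVector ω v j, y⟫ = ω (Function.update v j y) :=
  InnerProductSpace.toDual_symm_apply

theorem inner_cofactorVector_self (ω : E [⋀^ι]→ₗ[ℝ] ℝ) (v : ι → E) (i j : ι) :
    ⟪cofactorVector ω v i, v j⟫ = if i = j then ω v else 0 := by
  rw [inner_cofactorVector]
  split_ifs with hij
  · rw [hij, Function.update_eq_self]
  · exact ω.map_update_self v hij

end Cofactor

section Transference

variable {E : Type*} [NormedAddCommGroup E] [InnerProductSpace ℝ E] [FiniteDimensional ℝ E]
  [MeasurableSpace E] [BorelSpace E] {n : ℕ} {L : Submodule ℤ E} [DiscreteTopology L]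
  [IsZLattice ℝ L]

theorem IsMinimalSystem.prod_norm_le_covolume {v : Fin n → E} (hv : IsMinimalSystem L v)
    (hn : finrank ℝ E = n) : ∏ j, ‖v j‖ ≤ √n ^ n * ZLattice.covolume L := by
  let e := InnerProductSpace.gramSchmidtOrthonormalBasis (𝕜 := ℝ) (by simpa using hn) v
  have hbox : ∏ j, ‖v j‖ / √n ≤ ZLattice.covolume L :=
    prod_le_covolume L e (fun j => by positivity) fun x hxL hx => hv.eq_zero_of_abs_inner_lt e
      (fun i j => InnerProductSpace.gramSchmidtOrthonormalBasis_inv_triangular _ v) hxL hx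
  have hscale : ∏ j, ‖v j‖ = √n ^ n * ∏ j, ‖v j‖ / √n := by
    rw [← Fin.prod_const, ← Finset.prod_mul_distrib]
    refine Finset.prod_congr rfl fun j _ => ?_
    have : (0 : ℝ) < n := by exact_mod_cast j.pos
    field_simp
  rw [hscale]
  gcongr

theorem covolume_mul_abs_det_le_prod_norm (hn : finrank ℝ E = n) (b : Basis (Fin n) ℤ L)
    (v : Fin n → E) :
    ZLattice.covolume L * |(b.ofZLatticeBasis ℝ).det v| ≤ ∏ i, ‖v i‖ := by
  let e := (stdOrthonormalBasis ℝ E).reindex (finCongr hn)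
  rw [covolume_eq_abs_det L b e, ← abs_mul]
  have := abs_det_le_prod_norm e v
  rwa [AlternatingMap.eq_smul_basis_det (b.ofZLatticeBasis ℝ) e.toBasis.det] at this

theorem norm_mul_norm_cofactorVector_mul_covolume_le (hn : finrank ℝ E = n)
    (b : Basis (Fin n) ℤ L) (v : Fin n → E) (j : Fin n) :
    ‖v j‖ * ‖cofactorVector (b.ofZLatticeBasis ℝ).det v j‖ * ZLattice.covolume L ≤
      ∏ i, ‖v i‖ := by
  set w := cofactorVector (b.ofZLatticeBasis ℝ).det v j with hw
  rcases eq_or_ne w 0 with hw0 | hw0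
  · simpa [hw0] using Finset.prod_nonneg fun i _ => norm_nonneg (v i)
  have hdet : ‖w‖ ^ 2 = (b.ofZLatticeBasis ℝ).det (Function.update v j w) := by
    rw [← inner_cofactorVector, ← hw, real_inner_self_eq_norm_sq]
  have hprod : ∏ i, ‖Function.update v j w i‖ = ‖w‖ * ∏ i ∈ Finset.univ.erase j, ‖v i‖ := by
    rw [← Finset.mul_prod_erase _ _ (Finset.mem_univ j), Function.update_self]
    congr 1
    refine Finset.prod_congr rfl fun i hi => ?_
    rw [Function.update_of_ne (Finset.ne_of_mem_erase hi)]
  have hle : ZLattice.covolume L * ‖w‖ ^ 2 ≤ ‖w‖ * ∏ i ∈ Finset.univ.erase j, ‖v i‖ := by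
    rw [← hprod, hdet]
    exact (mul_le_mul_of_nonneg_left (le_abs_self _) (ZLattice.covolume_pos L).le).trans
      (covolume_mul_abs_det_le_prod_norm hn b _)
  have hle' : ‖w‖ * ZLattice.covolume L ≤ ∏ i ∈ Finset.univ.erase j, ‖v i‖ :=
    le_of_mul_le_mul_left (by linarith) (norm_pos_iff.2 hw0)
  calc ‖v j‖ * ‖w‖ * ZLattice.covolume L = ‖v j‖ * (‖w‖ * ZLattice.covolume L) := mul_assoc ..
    _ ≤ ‖v j‖ * ∏ i ∈ Finset.univ.erase j, ‖v i‖ := by gcongr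
    _ = ∏ i, ‖v i‖ := Finset.mul_prod_erase _ (fun i => ‖v i‖) (Finset.mem_univ j)

variable (L) in
theorem exists_dual_systems (hn : finrank ℝ E = n) : ∃ v w : Fin n → E,
    (∀ j, v j ∈ L) ∧ LinearIndependent ℝ v ∧ Monotone (fun j => ‖v j‖) ∧
    (∀ j, ∀ z ∈ L, ∃ c : ℤ, ⟪w j, z⟫ = c) ∧ LinearIndependent ℝ w ∧
    ∀ j, ‖v j‖ * ‖w j‖ ≤ √n ^ n := by
  obtain ⟨v, hv⟩ := exists_isMinimalSystem L hn.ge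
  have : Module.Finite ℤ L := ZLattice.module_finite ℝ L
  have : Module.Free ℤ L := ZLattice.module_free ℝ L
  let b : Basis (Fin n) ℤ L := finBasisOfFinrankEq ℤ L (by rw [ZLattice.rank ℝ L, hn])
  let ω := (b.ofZLatticeBasis ℝ).det
  have hω : ω v ≠ 0 := ((b.ofZLatticeBasis ℝ).is_basis_iff_det.1 ⟨hv.linearIndependent,
    hv.linearIndependent.span_eq_top_of_card_eq_finrank' (by simp [hn])⟩).ne_zero
  refine ⟨v, cofactorVector ω v, hv.mem, hv.linearIndependent, hv.monotone_norm, fun j z hz => ?_,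
    linearIndependent_of_inner_eq_ite hω (inner_cofactorVector_self ω v), fun j => ?_⟩
  · rw [inner_cofactorVector]
    refine exists_int_eq_det b fun i => ?_
    rcases eq_or_ne i j with rfl | hij
    · simpa using hz
    · simpa [hij] using hv.mem i
  · exact le_of_mul_le_mul_right ((norm_mul_norm_cofactorVector_mul_covolume_le hn b v j).trans
      (hv.prod_norm_le_covolume hn)) (ZLattice.covolume_pos L)

end Transference

section Boxes

variable {d k m : ℕ} {Λ : Set (Fin d → ℝ)} {σ τ : Fin d → ℝ}

/-- The dilation factors `λ > 0` for which the box `λ B_τ` contains `k` linearly independent points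
of `Λ`; the successive minimum `succMin d Λ τ k` is the infimum of this set. -/
def boxDilations (d : ℕ) (Λ : Set (Fin d → ℝ)) (τ : Fin d → ℝ) (k : ℕ) : Set ℝ :=
  {lam : ℝ | 0 < lam ∧ ∃ v : Fin k → (Fin d → ℝ),
    (∀ l, v l ∈ Λ) ∧ LinearIndependent ℝ v ∧ ∀ l i, |v l i| ≤ lam * Real.exp (τ i)}

theorem succMin_eq_sInf : succMin d Λ τ k = sInf (boxDilations d Λ τ k) := rfl

theorem bddBelow_boxDilations : BddBelow (boxDilations d Λ τ k) := ⟨0, fun _ h => h.1.le⟩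

theorem succMin_nonneg : 0 ≤ succMin d Λ τ k := Real.sInf_nonneg fun _ h => h.1.le

theorem exp_mul_mem_boxDilations {s x : ℝ} (hs : ∀ i, |τ i - σ i| ≤ s)
    (hx : x ∈ boxDilations d Λ σ k) : Real.exp s * x ∈ boxDilations d Λ τ k := by
  obtain ⟨hx0, v, hvΛ, hv, hle⟩ := hx
  refine ⟨by positivity, v, hvΛ, hv, fun l i => (hle l i).trans ?_⟩
  rw [mul_right_comm, mul_comm, ← Real.exp_add]
  gcongr
  linarith [neg_le_of_abs_le (hs i)]

theorem succMin_le_exp_mul_succMin {s : ℝ} (hs : ∀ i, |τ i - σ i| ≤ s) :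
    succMin d Λ τ k ≤ Real.exp s * succMin d Λ σ k := by
  rw [succMin_eq_sInf, succMin_eq_sInf]
  rcases (boxDilations d Λ σ k).eq_empty_or_nonempty with hσ | hσ
  · have hτ : boxDilations d Λ τ k = ∅ := Set.eq_empty_of_forall_notMem fun x hx =>
      hσ.subset (exp_mul_mem_boxDilations (fun i => by rw [abs_sub_comm]; exact hs i) hx)
    simp [hσ, hτ]
  · rw [← div_le_iff₀' (Real.exp_pos s)]
    refine le_csInf hσ fun x hx => ?_
    rw [div_le_iff₀' (Real.exp_pos s)]
    exact csInf_le bddBelow_boxDilations (exp_mul_mem_boxDilations hs hx)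

theorem Lk_sub_le {s : ℝ} (hs : ∀ i, |τ i - σ i| ≤ s) (hs0 : 0 ≤ s) :
    Lk d Λ τ k - Lk d Λ σ k ≤ s := by
  have hle := succMin_le_exp_mul_succMin (Λ := Λ) (k := k) hs
  have hge := succMin_le_exp_mul_succMin (Λ := Λ) (k := k) fun i =>
    (abs_sub_comm _ _).trans_le (hs i)
  rw [Lk, Lk]
  rcases (succMin_nonneg (Λ := Λ) (τ := τ) (k := k)).eq_or_lt with hτ | hτ
  · have hσ : succMin d Λ σ k = 0 := le_antisymm (by simpa [← hτ] using hge) succMin_nonneg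
    simpa [← hτ, hσ]
  · have hσ : 0 < succMin d Λ σ k := pos_of_mul_pos_right (hτ.trans_le hle) (Real.exp_pos s).le
    have := Real.log_le_log hτ hle
    rw [Real.log_mul (Real.exp_pos s).ne' hσ.ne', Real.log_exp] at this
    linarith

theorem abs_Lk_sub_Lk_le : |Lk d Λ τ k - Lk d Λ σ k| ≤ ⨆ i, |τ i - σ i| := by
  have hs (i) : |τ i - σ i| ≤ ⨆ i, |τ i - σ i| :=
    le_ciSup (Finite.bddAbove_range fun i => |τ i - σ i|) i
  have hs0 := Real.iSup_nonneg fun i => abs_nonneg (τ i - σ i)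
  exact abs_sub_le_iff.2
    ⟨Lk_sub_le hs hs0, Lk_sub_le (fun i => (abs_sub_comm _ _).trans_le (hs i)) hs0⟩

theorem exists_dotProduct_ne_zero {v : Fin k → Fin d → ℝ} {w : Fin m → Fin d → ℝ}
    (hv : LinearIndependent ℝ v) (hw : LinearIndependent ℝ w) (hkm : d < k + m) :
    ∃ l p, w p ⬝ᵥ v l ≠ 0 := by
  let e := (WithLp.linearEquiv 2 ℝ (Fin d → ℝ)).symm
  obtain ⟨l, p, h⟩ := exists_inner_ne_zero_of_finrank_lt (hv.map' e.toLinearMap e.ker)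
    (hw.map' e.toLinearMap e.ker) (by simpa using hkm)
  exact ⟨l, p, by simpa [e, EuclideanSpace.inner_toLp_toLp] using h⟩

theorem one_le_mul_of_mem_boxDilations {a b : ℝ} (ha : a ∈ boxDilations d Λ τ k)
    (hb : b ∈ boxDilations d (dualLattice d Λ) (-τ) m) (hkm : d < k + m) : 1 ≤ d * (a * b) := by
  obtain ⟨ha0, v, hvΛ, hv, hva⟩ := ha
  obtain ⟨hb0, w, hwΛ, hw, hwb⟩ := hb
  obtain ⟨l, p, hlp⟩ := exists_dotProduct_ne_zero hv hw hkm
  obtain ⟨c, hc⟩ := hwΛ p (v l) (hvΛ l)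
  have hc0 : c ≠ 0 := by
    rintro rfl
    exact hlp (hc.trans Int.cast_zero)
  calc (1 : ℝ) ≤ |(c : ℝ)| := by exact_mod_cast Int.one_le_abs hc0
    _ = |∑ i, w p i * v l i| := by rw [hc]
    _ ≤ ∑ i, |w p i| * |v l i| := by
      simpa only [abs_mul] using Finset.abs_sum_le_sum_abs (fun i => w p i * v l i) Finset.univ
    _ ≤ ∑ i, b * Real.exp (-τ i) * (a * Real.exp (τ i)) := by
      gcongr with i
      · exact hwb p i
      · exact hva l i
    _ = ∑ _i : Fin d, a * b := by
      refine Finset.sum_congr rfl fun i _ => ?_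
      rw [Real.exp_neg]
      field_simp
    _ = d * (a * b) := by simp

/-- The diagonal map `x ↦ (exp (τ i) * x i)`, carrying the unit cube onto `B_τ`. Its source carries
the Euclidean norm, its target is the space in which lattices and boxes are given. -/
def boxScale (τ : Fin d → ℝ) : EuclideanSpace ℝ (Fin d) ≃L[ℝ] (Fin d → ℝ) :=
  (EuclideanSpace.equiv (Fin d) ℝ).trans <| ContinuousLinearEquiv.piCongrRight fun i =>
    ContinuousLinearEquiv.smulLeft (Units.mk0 (Real.exp (τ i)) (Real.exp_ne_zero _))

theorem boxScale_apply (τ : Fin d → ℝ) (x : EuclideanSpace ℝ (Fin d)) (i : Fin d) :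
    boxScale τ x i = Real.exp (τ i) * x i := rfl

theorem sum_boxScale_neg_mul_boxScale (τ : Fin d → ℝ) (x y : EuclideanSpace ℝ (Fin d)) :
    ∑ i, boxScale (-τ) x i * boxScale τ y i = ⟪x, y⟫ := by
  simp only [boxScale_apply, Pi.neg_apply, Real.exp_neg, PiLp.inner_apply, RCLike.inner_apply,
    conj_trivial]
  refine Finset.sum_congr rfl fun i _ => ?_
  field_simp

theorem mem_boxDilations_of_norm_le {r : ℝ} (hr : 0 < r) {v : Fin k → EuclideanSpace ℝ (Fin d)}
    (hv : LinearIndependent ℝ v) (hvΛ : ∀ l, boxScale τ (v l) ∈ Λ) (hle : ∀ l, ‖v l‖ ≤ r) :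
    r ∈ boxDilations d Λ τ k := by
  refine ⟨hr, boxScale τ ∘ v, hvΛ,
    hv.map' (boxScale τ).toLinearEquiv.toLinearMap (boxScale τ).toLinearEquiv.ker, fun l i => ?_⟩
  rw [Function.comp_apply, boxScale_apply, abs_mul, Real.abs_exp, mul_comm]
  gcongr
  exact (PiLp.norm_apply_le (v l) i).trans (hle l)

end Boxes

theorem le_sInf_mul_sInf {S T : Set ℝ} {c : ℝ} (hS : S.Nonempty) (hT : T.Nonempty)
    (hS0 : ∀ a ∈ S, 0 ≤ a) (hT0 : ∀ b ∈ T, 0 < b)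
    (h : ∀ a ∈ S, ∀ b ∈ T, c ≤ a * b) : c ≤ sInf S * sInf T := by
  have hST : ∀ b ∈ T, c ≤ sInf S * b := fun b hb => by
    rw [← div_le_iff₀ (hT0 b hb)]
    exact le_csInf hS fun a ha => (div_le_iff₀ (hT0 b hb)).2 (h a ha b hb)
  rw [← smul_eq_mul, ← Real.sInf_smul_of_nonneg (Real.sInf_nonneg hS0)]
  exact le_csInf hT.smul_set (Set.forall_mem_image.2 hST)

section LatticeBoxes

variable {d k m : ℕ} (L : Submodule ℤ (Fin d → ℝ)) [DiscreteTopology L] [IsZLattice ℝ L]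

theorem exists_mem_boxDilations_mul_le (hk : 0 < k) (hm : 0 < m) (hkm : k + m = d + 1)
    (τ : Fin d → ℝ) : ∃ a ∈ boxDilations d (L : Set (Fin d → ℝ)) τ k,
      ∃ b ∈ boxDilations d (dualLattice d L) (-τ) m, a * b ≤ √d ^ d := by
  obtain ⟨v, w, hvL, hv, hmono, hwL, hw, hvw⟩ := exists_dual_systems
    (ZLattice.comap ℝ L (boxScale τ).toLinearMap) (n := d) finrank_euclideanSpace_fin
  have hd : (0 : ℝ) < d := by exact_mod_cast (by lia : 0 < d)
  let first (l : Fin k) : Fin d := l.castLE (by lia)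
  let last (p : Fin m) : Fin d := ⟨k - 1 + p, by lia⟩
  let j : Fin d := ⟨k - 1, by lia⟩
  have hfirst (l) : first l ≤ j := Fin.mk_le_mk.2 (by lia)
  have hlast (p) : j ≤ last p := Fin.mk_le_mk.2 (by lia)
  have hvj : 0 < ‖v j‖ := norm_pos_iff.2 (hv.ne_zero j)
  have hvmem : ‖v j‖ ∈ boxDilations d (L : Set (Fin d → ℝ)) τ k :=
    mem_boxDilations_of_norm_le hvj (hv.comp first (Fin.castLE_injective _))
      (fun l => hvL (first l)) fun l => hmono (hfirst l)
  have hwmem : √d ^ d / ‖v j‖ ∈ boxDilations d (dualLattice d L) (-τ) m := by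
    refine mem_boxDilations_of_norm_le (by positivity) (hw.comp last fun p q h => by grind)
      (fun p z hz => ?_) fun p => ?_
    · obtain ⟨z, rfl⟩ := (boxScale τ).surjective z
      simpa only [Function.comp_apply, sum_boxScale_neg_mul_boxScale] using hwL (last p) z hz
    · rw [le_div_iff₀' hvj]
      exact (mul_le_mul_of_nonneg_right (hmono (hlast p)) (norm_nonneg _)).trans (hvw (last p))
  exact ⟨_, hvmem, _, hwmem, (mul_div_cancel₀ _ hvj.ne').le⟩

theorem abs_Lk_add_Lk_dualLattice_le (hk : 0 < k) (hm : 0 < m) (hkm : k + m = d + 1)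
    (τ : Fin d → ℝ) :
    |Lk d (L : Set (Fin d → ℝ)) τ k + Lk d (dualLattice d L) (-τ) m| ≤
      max |Real.log (d : ℝ)⁻¹| |Real.log (√d ^ d)| := by
  have hd : (0 : ℝ) < d := by exact_mod_cast (by lia : 0 < d)
  obtain ⟨a, ha, b, hb, hab⟩ := exists_mem_boxDilations_mul_le L hk hm hkm τ
  have hlower : (d : ℝ)⁻¹ ≤ succMin d L τ k * succMin d (dualLattice d L) (-τ) m :=
    le_sInf_mul_sInf ⟨a, ha⟩ ⟨b, hb⟩ (fun _ h => h.1.le) (fun _ h => h.1) fun x hx y hy =>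
      (inv_le_iff_one_le_mul₀' hd).2 (one_le_mul_of_mem_boxDilations hx hy (by lia))
  have hupper : succMin d L τ k * succMin d (dualLattice d L) (-τ) m ≤ √d ^ d :=
    (mul_le_mul (csInf_le bddBelow_boxDilations ha) (csInf_le bddBelow_boxDilations hb)
      succMin_nonneg ha.1.le).trans hab
  have hpos := (inv_pos.2 hd).trans_le hlower
  rw [Lk, Lk, ← Real.log_mul (left_ne_zero_of_mul hpos.ne') (right_ne_zero_of_mul hpos.ne')]
  exact abs_le_max_abs_abs (Real.log_le_log (inv_pos.2 hd) hlower) (Real.log_le_log hpos hupper)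

end LatticeBoxes

section Liminf

variable {α : Type*} {F : Filter α}

theorem liminf_neg_eq (u : α → ℝ) : liminf (fun x => -u x) F = -limsup u F := by
  rw [limsup_eq, liminf_eq, ← Real.sSup_neg]
  congr 1
  ext a
  simp only [Set.mem_ofPred_eq, Set.mem_neg, le_neg]

variable [F.NeBot]

theorem map_liminf_le_liminf {φ : ℝ → ℝ} (hφ : Monotone φ) (hφc : Continuous φ) {u v : α → ℝ}
    (hu : F.IsBoundedUnder (· ≤ ·) fun x => |u x|) (hv : F.IsBoundedUnder (· ≤ ·) fun x => |v x|)
    (h : ∀ ε > 0, ∀ᶠ x in F, φ (u x) ≤ v x + ε) : φ (liminf u F) ≤ liminf v F := by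
  obtain ⟨hu_le, hu_ge⟩ := isBoundedUnder_le_abs.1 hu
  obtain ⟨hv_le, -⟩ := isBoundedUnder_le_abs.1 hv
  refine le_of_forall_pos_sub_le fun ε hε => ?_
  have hmono : Monotone fun x => φ x - ε := fun x y hxy => sub_le_sub_right (hφ hxy) ε
  have hmap := hmono.map_liminf_of_continuousAt u (by fun_prop) hu_le.isCoboundedUnder_ge hu_ge
  rw [hmap]
  refine liminf_le_liminf ?_ (hmono.isBoundedUnder_ge_comp hu_ge) hv_le.isCoboundedUnder_ge
  filter_upwards [h ε hε] with x hx
  exact sub_le_iff_le_add.2 hx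

/-- The least of the values `r * x` with `K⁻¹ ≤ r ≤ K`, for `K ≥ 1`. -/
def minDilation (K x : ℝ) : ℝ := min (K * x) (K⁻¹ * x)

variable {K : ℝ}

theorem minDilation_le_mul {r x : ℝ} (hr : K⁻¹ ≤ r) (hr' : r ≤ K) : minDilation K x ≤ r * x := by
  rcases le_total 0 x with hx | hx
  · exact (min_le_right _ _).trans (mul_le_mul_of_nonneg_right hr hx)
  · exact (min_le_left _ _).trans (mul_le_mul_of_nonpos_right hr' hx)

theorem monotone_minDilation (hK : 0 ≤ K) : Monotone (minDilation K) :=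
  (monotone_id.const_mul hK).min (monotone_id.const_mul (inv_nonneg.2 hK))

theorem continuous_minDilation : Continuous (minDilation K) := by
  unfold minDilation
  fun_prop

theorem minDilation_of_nonneg (hK : 1 ≤ K) {x : ℝ} (hx : 0 ≤ x) : minDilation K x = K⁻¹ * x :=
  min_eq_right (mul_le_mul_of_nonneg_right ((inv_le_one_of_one_le₀ hK).trans hK) hx)

theorem minDilation_of_nonpos (hK : 1 ≤ K) {x : ℝ} (hx : x ≤ 0) : minDilation K x = K * x :=
  min_eq_left (mul_le_mul_of_nonpos_right ((inv_le_one_of_one_le₀ hK).trans hK) hx)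

theorem sign_minDilation (hK : 1 ≤ K) (x : ℝ) :
    SignType.sign (minDilation K x) = SignType.sign x := by
  have hK0 : 0 < K := one_pos.trans_le hK
  rcases le_total 0 x with hx | hx
  · rw [minDilation_of_nonneg hK hx, sign_mul, sign_pos (inv_pos.2 hK0), one_mul]
  · rw [minDilation_of_nonpos hK hx, sign_mul, sign_pos hK0, one_mul]

theorem sign_eq_sign_of_minDilation_le (hK : 1 ≤ K) {a b : ℝ} (hab : minDilation K a ≤ b)
    (hba : minDilation K b ≤ a) : SignType.sign a = SignType.sign b :=
  le_antisymm (sign_minDilation hK a ▸ SignType.sign.monotone hab)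
    (sign_minDilation hK b ▸ SignType.sign.monotone hba)

theorem abs_le_mul_abs_of_minDilation_le (hK : 1 ≤ K) {a b : ℝ} (hab : minDilation K a ≤ b)
    (hba : minDilation K b ≤ a) : |a| ≤ K * |b| := by
  have hK0 : 0 < K := one_pos.trans_le hK
  rcases le_total 0 a with ha | ha
  · rw [minDilation_of_nonneg hK ha, inv_mul_le_iff₀ hK0] at hab
    rw [abs_of_nonneg ha]
    exact hab.trans (mul_le_mul_of_nonneg_left (le_abs_self b) hK0.le)
  · have hb : b ≤ 0 := by
      by_contra! hb
      rw [minDilation_of_nonneg hK hb.le] at hba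
      exact hba.not_gt (ha.trans_lt (by positivity))
    rw [minDilation_of_nonpos hK hb] at hba
    rw [abs_of_nonpos ha, abs_of_nonpos hb]
    linarith

theorem minDilation_liminf_div_le {g h f f' : α → ℝ} (hK : 1 ≤ K) (hf : Tendsto f F atTop)
    (hf' : Tendsto f' F atTop) (hff' : ∀ᶠ x in F, f x ≤ K * f' x)
    (hf'f : ∀ᶠ x in F, f' x ≤ K * f x) {C : ℝ} (hgh : ∀ᶠ x in F, g x ≤ h x + C) (hg : g =O[F] f)
    (hh : h =O[F] f') :
    minDilation K (liminf (fun x => g x / f x) F) ≤ liminf (fun x => h x / f' x) F := by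
  have hK0 : 0 < K := one_pos.trans_le hK
  have habs {p q : α → ℝ} (hq : Tendsto q F atTop) (hpq : p =O[F] q) :
      F.IsBoundedUnder (· ≤ ·) fun x => |p x / q x| := by
    simpa only [Real.norm_eq_abs, abs_div] using
      (Asymptotics.isBigO_iff_isBoundedUnder_le_div (hq.eventually_ne_atTop 0)).1 hpq
  refine map_liminf_le_liminf (monotone_minDilation hK0.le) continuous_minDilation (habs hf hg)
    (habs hf' hh) fun ε hε => ?_
  filter_upwards [hff', hf'f, hgh, hf.eventually_gt_atTop 0, hf'.eventually_gt_atTop 0,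
    hf'.eventually_ge_atTop (C / ε)] with x hx hx' hghx hfx hf'x hC
  calc minDilation K (g x / f x) ≤ f x / f' x * (g x / f x) := by
        refine minDilation_le_mul ?_ ((div_le_iff₀ hf'x).2 hx)
        rw [le_div_iff₀ hf'x, inv_mul_le_iff₀ hK0]
        exact hx'
    _ = g x / f' x := by field_simp
    _ ≤ (h x + C) / f' x := by gcongr
    _ = h x / f' x + C / f' x := add_div ..
    _ ≤ h x / f' x + ε := by
      gcongr
      rwa [div_le_iff₀ hf'x, ← div_le_iff₀' hε]

end Liminf

section Tfilter

variable {d : ℕ}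

theorem eventually_Tfilter_sum_eq_zero : ∀ᶠ τ in Tfilter d, ∑ i, τ i = 0 :=
  mem_inf_of_right (mem_principal_self _)

theorem tendsto_iSup_abs_Tfilter : Tendsto (fun τ : Fin d → ℝ => ⨆ i, |τ i|) (Tfilter d) atTop :=
  tendsto_comap.mono_left inf_le_left

theorem tendsto_neg_Tfilter : Tendsto Neg.neg (Tfilter d) (Tfilter d) := by
  refine tendsto_inf.2 ⟨tendsto_comap_iff.2 ?_, tendsto_principal.2 ?_⟩
  · simpa only [Function.comp_def, Pi.neg_apply, abs_neg] using tendsto_iSup_abs_Tfilter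
  · filter_upwards [eventually_Tfilter_sum_eq_zero] with τ hτ
    simpa using hτ

theorem map_neg_Tfilter : map Neg.neg (Tfilter d) = Tfilter d :=
  map_eq_of_inverse _ (neg_comp_neg _) tendsto_neg_Tfilter tendsto_neg_Tfilter

theorem liminf_comp_neg_Tfilter (u : (Fin d → ℝ) → ℝ) :
    liminf (fun τ => u (-τ)) (Tfilter d) = liminf u (Tfilter d) :=
  congrArg (liminf u) map_neg_Tfilter

theorem Tfilter_neBot (hd : 2 ≤ d) : (Tfilter d).NeBot := by
  let i : Fin d := ⟨0, by lia⟩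
  let j : Fin d := ⟨1, by lia⟩
  have hij : i ≠ j := by simp [i, j]
  let ray (t : ℝ) : Fin d → ℝ := Pi.single i t - Pi.single j t
  have hray : Tendsto ray atTop (Tfilter d) := by
    refine tendsto_inf.2 ⟨tendsto_comap_iff.2 ?_, tendsto_principal.2 ?_⟩
    · refine tendsto_atTop_mono (fun t => ?_) tendsto_id
      calc t ≤ |ray t i| := by simpa [ray, hij] using le_abs_self t
        _ ≤ ⨆ i, |ray t i| := le_ciSup (Finite.bddAbove_range fun i => |ray t i|) i
    · exact Eventually.of_forall fun t => by simp [ray, Finset.sum_sub_distrib]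
  exact hray.neBot

theorem neg_le_mul_iSup_of_sum_eq_zero {τ : Fin d → ℝ} (hτ : ∑ i, τ i = 0) (i : Fin d) :
    -τ i ≤ ((d : ℝ) - 1) * ⨆ j, τ j := by
  have hsum := Finset.add_sum_erase Finset.univ τ (Finset.mem_univ i)
  calc -τ i = ∑ j ∈ Finset.univ.erase i, τ j := by linarith
    _ ≤ ∑ _j ∈ Finset.univ.erase i, ⨆ j, τ j :=
      Finset.sum_le_sum fun j _ => le_ciSup (Finite.bddAbove_range τ) j
    _ = ((d : ℝ) - 1) * ⨆ j, τ j := by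
      rw [Finset.sum_const, Finset.card_erase_of_mem (Finset.mem_univ i), Finset.card_univ,
        Fintype.card_fin, nsmul_eq_mul, Nat.cast_pred i.pos]

theorem eventually_iSup_neg_le_mul_iSup (hd : 0 < d) :
    ∀ᶠ τ in Tfilter d, ⨆ i, -τ i ≤ ((d : ℝ) - 1) * ⨆ i, τ i := by
  have : Nonempty (Fin d) := ⟨⟨0, hd⟩⟩
  filter_upwards [eventually_Tfilter_sum_eq_zero] with τ hτ
  exact ciSup_le (neg_le_mul_iSup_of_sum_eq_zero hτ)

theorem eventually_iSup_le_mul_iSup_neg (hd : 0 < d) :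
    ∀ᶠ τ in Tfilter d, ⨆ i, τ i ≤ ((d : ℝ) - 1) * ⨆ i, -τ i := by
  simpa only [Pi.neg_apply, neg_neg] using
    tendsto_neg_Tfilter.eventually (eventually_iSup_neg_le_mul_iSup hd)

theorem iSup_nonneg_of_sum_eq_zero {ι : Type*} [Fintype ι] {τ : ι → ℝ} (hτ : ∑ i, τ i = 0) :
    0 ≤ ⨆ i, τ i := by
  cases isEmpty_or_nonempty ι
  · exact (Real.iSup_of_isEmpty τ).ge
  · obtain ⟨i, -, hi⟩ := Finset.exists_le_of_sum_le (f := 0) (g := τ) Finset.univ_nonempty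
      (by simp [hτ])
    exact Real.iSup_nonneg' ⟨i, hi⟩

theorem iSup_abs_le_mul_iSup (hd : 2 ≤ d) {τ : Fin d → ℝ} (hτ : ∑ i, τ i = 0) :
    ⨆ i, |τ i| ≤ ((d : ℝ) - 1) * ⨆ i, τ i := by
  have : Nonempty (Fin d) := ⟨⟨0, by lia⟩⟩
  have hd' : (2 : ℝ) ≤ d := by exact_mod_cast hd
  refine ciSup_le fun i => abs_le'.2 ⟨?_, neg_le_mul_iSup_of_sum_eq_zero hτ i⟩
  calc τ i ≤ ⨆ j, τ j := le_ciSup (Finite.bddAbove_range τ) i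
    _ ≤ ((d : ℝ) - 1) * ⨆ j, τ j :=
      le_mul_of_one_le_left (iSup_nonneg_of_sum_eq_zero hτ) (by linarith)

theorem tendsto_iSup_Tfilter (hd : 2 ≤ d) :
    Tendsto (fun τ : Fin d → ℝ => ⨆ i, τ i) (Tfilter d) atTop := by
  have hd' : (2 : ℝ) ≤ d := by exact_mod_cast hd
  refine (tendsto_const_mul_atTop_of_pos (by linarith : (0 : ℝ) < d - 1)).1
    (tendsto_atTop_mono' _ ?_ tendsto_iSup_abs_Tfilter)
  filter_upwards [eventually_Tfilter_sum_eq_zero] with τ hτ using iSup_abs_le_mul_iSup hd hτ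

theorem isBigO_iSup_of_abs_sub_le (hd : 2 ≤ d) {P : (Fin d → ℝ) → ℝ}
    (hP : ∀ τ, |P τ - P 0| ≤ ⨆ i, |τ i|) : P =O[Tfilter d] fun τ => ⨆ i, τ i := by
  have hsup : (fun τ => P τ - P 0) =O[Tfilter d] fun τ => ⨆ i, τ i := by
    refine Asymptotics.IsBigO.of_bound ((d : ℝ) - 1) ?_
    filter_upwards [eventually_Tfilter_sum_eq_zero] with τ hτ
    rw [Real.norm_eq_abs, Real.norm_of_nonneg (iSup_nonneg_of_sum_eq_zero hτ)]
    exact (hP τ).trans (iSup_abs_le_mul_iSup hd hτ)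
  have hconst : (fun _ => P 0) =O[Tfilter d] fun τ : Fin d → ℝ => ⨆ i, τ i :=
    (Asymptotics.isLittleO_const_left.2
      (.inr (tendsto_norm_atTop_atTop.comp (tendsto_iSup_Tfilter hd)))).isBigO
  simpa using hsup.add hconst

theorem sign_liminf_div_iSup_and_abs_le (hd : 2 ≤ d) {P Q : (Fin d → ℝ) → ℝ} {C : ℝ}
    (hPQ : ∀ τ, |P τ + Q (-τ)| ≤ C) (hP : P =O[Tfilter d] fun τ => ⨆ i, τ i)
    (hQ : Q =O[Tfilter d] fun τ => ⨆ i, τ i) :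
    let a := liminf (fun τ => P τ / ⨆ i, τ i) (Tfilter d)
    let b := limsup (fun τ => Q τ / ⨆ i, τ i) (Tfilter d)
    SignType.sign a = -SignType.sign b ∧
      |a| ≤ ((d : ℝ) - 1) * |b| ∧ |b| ≤ ((d : ℝ) - 1) * |a| := by
  intro a b
  have : (Tfilter d).NeBot := Tfilter_neBot hd
  have hK : (1 : ℝ) ≤ d - 1 := by
    have : (2 : ℝ) ≤ d := by exact_mod_cast hd
    linarith
  have hf := tendsto_iSup_Tfilter hd
  have hf' : Tendsto (fun τ : Fin d → ℝ => ⨆ i, -τ i) (Tfilter d) atTop :=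
    hf.comp tendsto_neg_Tfilter
  have hff' := eventually_iSup_le_mul_iSup_neg (d := d) (by lia)
  have hf'f := eventually_iSup_neg_le_mul_iSup (d := d) (by lia)
  have hQ' : (fun τ => -Q (-τ)) =O[Tfilter d] fun τ => ⨆ i, -τ i :=
    (hQ.comp_tendsto tendsto_neg_Tfilter).neg_left
  have hb : liminf (fun τ => -Q (-τ) / ⨆ i, -τ i) (Tfilter d) = -b := by
    simp only [← liminf_neg_eq, b, neg_div]
    exact liminf_comp_neg_Tfilter fun τ => -(Q τ / ⨆ i, τ i)
  have hab := minDilation_liminf_div_le hK hf hf' hff' hf'f (C := C)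
    (.of_forall fun τ => by linarith [(abs_le.1 (hPQ τ)).2]) hP hQ'
  have hba := minDilation_liminf_div_le hK hf' hf hf'f hff' (C := C)
    (.of_forall fun τ => by linarith [(abs_le.1 (hPQ τ)).1]) hQ' hP
  rw [hb] at hab hba
  refine ⟨?_, ?_, ?_⟩
  · rw [← Left.sign_neg]
    exact sign_eq_sign_of_minDilation_le hK hab hba
  · simpa using abs_le_mul_abs_of_minDilation_le hK hab hba
  · simpa using abs_le_mul_abs_of_minDilation_le hK hba hab

end Tfilter

theorem sign_eq_neg_sign_iff {a b : ℝ} : SignType.sign a = -SignType.sign b ↔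
    (a = 0 ∧ b = 0) ∨ (a < 0 ∧ 0 < b) ∨ (0 < a ∧ b < 0) := by
  rcases lt_trichotomy a 0 with ha | rfl | ha <;> rcases lt_trichotomy b 0 with hb | rfl | hb <;>
    simp [*, LT.lt.ne, LT.lt.ne', LT.lt.not_gt]

theorem Lk_isBigO_iSup {d : ℕ} (hd : 2 ≤ d) (Λ : Set (Fin d → ℝ)) (k : ℕ) :
    (fun τ => Lk d Λ τ k) =O[Tfilter d] fun τ => ⨆ i, τ i :=
  isBigO_iSup_of_abs_sub_le hd fun τ => by simpa using abs_Lk_sub_Lk_le (τ := τ) (σ := 0)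

theorem IsUnimodularLattice.exists_isZLattice {d : ℕ} {Λ : Set (Fin d → ℝ)}
    (hΛ : IsUnimodularLattice d Λ) : ∃ (L : Submodule ℤ (Fin d → ℝ)) (_ : DiscreteTopology L),
      IsZLattice ℝ L ∧ (L : Set (Fin d → ℝ)) = Λ := by
  obtain ⟨B, hB, rfl⟩ := hΛ
  have hli : LinearIndependent ℝ B.col :=
    Matrix.linearIndependent_cols_iff_isUnit.2 <|
      B.isUnit_iff_isUnit_det.2 (abs_pos.1 (hB ▸ one_pos)).isUnit
  let b := Basis.mk hli (hli.span_eq_top_of_card_eq_finrank' (by simp)).ge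
  have hb : ⇑b = B.col := Basis.coe_mk ..
  refine ⟨Submodule.span ℤ (Set.range b), inferInstance, inferInstance, ?_⟩
  ext v
  rw [SetLike.mem_coe, hb, Submodule.mem_span_range_iff_exists_fun]
  refine exists_congr fun x => ?_
  rw [Matrix.mulVec_eq_sum, eq_comm]
  simp [Matrix.col, Int.cast_smul_eq_zsmul]

theorem stmt19_general (d : ℕ) (hd : 2 ≤ d) (L : Submodule ℤ (Fin d → ℝ)) [DiscreteTopology L]
    [IsZLattice ℝ L] (k : ℕ) (hk1 : 1 ≤ k) (hkd : k ≤ d) :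
    ((psiLowF d L k = 0 ∧ psiUpF d (dualLattice d L) (d + 1 - k) = 0) ∨
      (psiLowF d L k < 0 ∧ 0 < psiUpF d (dualLattice d L) (d + 1 - k)) ∨
      (0 < psiLowF d L k ∧ psiUpF d (dualLattice d L) (d + 1 - k) < 0)) ∧
    ((psiUpF d L k = 0 ∧ psiLowF d (dualLattice d L) (d + 1 - k) = 0) ∨
      (psiUpF d L k < 0 ∧ 0 < psiLowF d (dualLattice d L) (d + 1 - k)) ∨
      (0 < psiUpF d L k ∧ psiLowF d (dualLattice d L) (d + 1 - k) < 0)) ∧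
    |psiLowF d L k| ≤ ((d : ℝ) - 1) * |psiUpF d (dualLattice d L) (d + 1 - k)| ∧
    |psiUpF d L k| ≤ ((d : ℝ) - 1) * |psiLowF d (dualLattice d L) (d + 1 - k)| := by
  have hsum := abs_Lk_add_Lk_dualLattice_le L (k := k) (m := d + 1 - k) hk1 (by lia) (by lia)
  have hL := Lk_isBigO_iSup hd L k
  have hL' := Lk_isBigO_iSup hd (dualLattice d L) (d + 1 - k)
  obtain ⟨hsign, hle, -⟩ := sign_liminf_div_iSup_and_abs_le hd hsum hL hL'
  obtain ⟨hsign', -, hle'⟩ := sign_liminf_div_iSup_and_abs_le hd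
    (fun τ => by simpa only [neg_neg, add_comm] using hsum (-τ)) hL' hL
  exact ⟨sign_eq_neg_sign_iff.1 hsign, sign_eq_neg_sign_iff.1 (neg_eq_iff_eq_neg.1 hsign'.symm),
    hle, hle'⟩

theorem stmt19 (d : ℕ) (hd : 2 ≤ d) (Λ : Set (Fin d → ℝ))
    (hΛ : IsUnimodularLattice d Λ) (k : ℕ) (hk1 : 1 ≤ k) (hkd : k ≤ d) :
    ((psiLowF d Λ k = 0 ∧ psiUpF d (dualLattice d Λ) (d + 1 - k) = 0) ∨
      (psiLowF d Λ k < 0 ∧ 0 < psiUpF d (dualLattice d Λ) (d + 1 - k)) ∨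
      (0 < psiLowF d Λ k ∧ psiUpF d (dualLattice d Λ) (d + 1 - k) < 0)) ∧
    ((psiUpF d Λ k = 0 ∧ psiLowF d (dualLattice d Λ) (d + 1 - k) = 0) ∨
      (psiUpF d Λ k < 0 ∧ 0 < psiLowF d (dualLattice d Λ) (d + 1 - k)) ∨
      (0 < psiUpF d Λ k ∧ psiLowF d (dualLattice d Λ) (d + 1 - k) < 0)) ∧
    |psiLowF d Λ k| ≤ ((d : ℝ) - 1) * |psiUpF d (dualLattice d Λ) (d + 1 - k)| ∧
    |psiUpF d Λ k| ≤ ((d : ℝ) - 1) * |psiLowF d (dualLattice d Λ) (d + 1 - k)| := by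
  obtain ⟨L, _, _, rfl⟩ := hΛ.exists_isZLattice
  exact stmt19_general d hd L k hk1 hkd
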